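/- Let A, P, G be real n×n matrices, where P and G are invertible symmetric matrices that commute (PG = GP). If PA + AᵀP is positive definite, then every λ ∈ σ(AG) has Re λ ≠ 0, i.e., AG has no purely imaginary eigenvalues. -/

import Mathlib

open Matrix

/-- The spectrum of a real square matrix, viewed as a subset of `ℂ`:
the set of complex roots of its characteristic polynomial. -/
def spec {m : Type*} [Fintype m] [DecidableEq m] (M : Matrix m m ℝ) : Set ℂ :=
  spectrum ℂ (M.map (Complex.ofReal ·))

/-- A real matrix `W` is positive definite (as a quadratic form):
`xᵀ W x > 0` for every nonzero real vector `x`. -/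
def PosDefQ {n : ℕ} (W : Matrix (Fin n) (Fin n) ℝ) : Prop :=
  ∀ x : Fin n → ℝ, x ≠ 0 → 0 < x ⬝ᵥ (W *ᵥ x)

/-! Let `v` be an eigenvector of `A * G` for the eigenvalue `z`, and test the form of
`P * A + Aᴴ * P` on `w = G *ᵥ v`, which is nonzero as `G` is invertible. Since `A *ᵥ w = z • v` and
`Gᴴ * P = P * G`, both summands are multiples of the same number `star v ⬝ᵥ (P * G) *ᵥ v`, with
coefficients `z` and `star z`. Hence the form vanishes at `w` if `re z = 0`. For a real matrix whose
form is positive, the complexified form does not vanish at any `w ≠ 0`: its real part at `x + i y`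
is the sum of the values at `x` and `y`. -/

section Eigenvector

variable {m : Type*} [Fintype m]

theorem star_mulVec_dotProduct_lyapunov_mulVec {R : Type*} [CommSemiring R] [StarRing R]
    {A P G : Matrix m m R} (hGP : Gᴴ * P = P * G) {v : m → R} {z : R}
    (hv : (A * G) *ᵥ v = z • v) :
    star (G *ᵥ v) ⬝ᵥ ((P * A + Aᴴ * P) *ᵥ (G *ᵥ v)) =
      (z + star z) * (star v ⬝ᵥ ((P * G) *ᵥ v)) := by
  have hAGv : A *ᵥ (G *ᵥ v) = z • v := by rw [mulVec_mulVec, hv]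
  have left : star (G *ᵥ v) ⬝ᵥ ((P * A) *ᵥ (G *ᵥ v)) = z * (star v ⬝ᵥ ((P * G) *ᵥ v)) := by
    rw [← mulVec_mulVec, hAGv, mulVec_smul, dotProduct_smul, smul_eq_mul, star_mulVec,
      ← dotProduct_mulVec, mulVec_mulVec, hGP]
  have right : star (G *ᵥ v) ⬝ᵥ ((Aᴴ * P) *ᵥ (G *ᵥ v)) =
      star z * (star v ⬝ᵥ ((P * G) *ᵥ v)) := by
    rw [← mulVec_mulVec, dotProduct_mulVec, ← star_mulVec, hAGv, star_smul, smul_dotProduct,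
      smul_eq_mul, mulVec_mulVec]
  rw [add_mulVec, dotProduct_add, left, right, add_mul]

theorem exists_mulVec_eq_smul_of_mem_spectrum [DecidableEq m] {K : Type*} [Field K]
    {M : Matrix m m K} {z : K} (hz : z ∈ spectrum K M) : ∃ v ≠ 0, M *ᵥ v = z • v := by
  rw [← spectrum_toLin', ← Module.End.hasEigenvalue_iff_mem_spectrum] at hz
  obtain ⟨v, hv⟩ := hz.exists_hasEigenvector
  exact ⟨v, hv.2, hv.apply_eq_smul⟩

theorem stmt17_general [DecidableEq m] {𝕜 : Type*} [RCLike 𝕜] {A P G : Matrix m m 𝕜}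
    (hG : IsUnit G) (hGP : Gᴴ * P = P * G)
    (hLyap : ∀ w ≠ 0, star w ⬝ᵥ ((P * A + Aᴴ * P) *ᵥ w) ≠ 0) :
    ∀ z ∈ spectrum 𝕜 (A * G), RCLike.re z ≠ 0 := by
  intro z hz hre
  obtain ⟨v, hv0, hv⟩ := exists_mulVec_eq_smul_of_mem_spectrum hz
  have hGv : G *ᵥ v ≠ 0 := fun h =>
    hv0 (mulVec_injective_iff_isUnit.2 hG (h.trans (mulVec_zero G).symm))
  have hzz : z + star z = 0 := by
    rw [RCLike.star_def, RCLike.add_conj, hre, RCLike.ofReal_zero, mul_zero]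
  apply hLyap _ hGv
  rw [star_mulVec_dotProduct_lyapunov_mulVec hGP hv, hzz, zero_mul]

end Eigenvector

section Complexification

variable {m : Type*} [Fintype m] [DecidableEq m]

theorem re_star_dotProduct_mapMatrix_ofRealHom_mulVec (W : Matrix m m ℝ) (v : m → ℂ) :
    (star v ⬝ᵥ (Complex.ofRealHom.mapMatrix W *ᵥ v)).re =
      (fun i => (v i).re) ⬝ᵥ (W *ᵥ fun i => (v i).re) +
        (fun i => (v i).im) ⬝ᵥ (W *ᵥ fun i => (v i).im) := by
  simp [dotProduct, mulVec, Finset.sum_add_distrib]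

theorem conjTranspose_mapMatrix_ofRealHom (M : Matrix m m ℝ) :
    (Complex.ofRealHom.mapMatrix M)ᴴ = Complex.ofRealHom.mapMatrix Mᵀ := by
  ext i j
  simp

end Complexification

theorem PosDefQ.dotProduct_mulVec_nonneg {n : ℕ} {W : Matrix (Fin n) (Fin n) ℝ} (hW : PosDefQ W)
    (x : Fin n → ℝ) : 0 ≤ x ⬝ᵥ (W *ᵥ x) := by
  obtain rfl | hx := eq_or_ne x 0
  · rw [zero_dotProduct]
  · exact (hW x hx).le

theorem PosDefQ.re_star_dotProduct_mapMatrix_mulVec_pos {n : ℕ} {W : Matrix (Fin n) (Fin n) ℝ}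
    (hW : PosDefQ W) {v : Fin n → ℂ} (hv : v ≠ 0) :
    0 < (star v ⬝ᵥ (Complex.ofRealHom.mapMatrix W *ᵥ v)).re := by
  rw [re_star_dotProduct_mapMatrix_ofRealHom_mulVec]
  by_cases hre : (fun i => (v i).re) = 0
  · have him : (fun i => (v i).im) ≠ 0 := fun him =>
      hv (funext fun i => Complex.ext (congrFun hre i) (congrFun him i))
    exact add_pos_of_nonneg_of_pos (hW.dotProduct_mulVec_nonneg _) (hW _ him)
  · exact add_pos_of_pos_of_nonneg (hW _ hre) (hW.dotProduct_mulVec_nonneg _)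

theorem PosDefQ.star_dotProduct_lyapunov_mulVec_ne_zero {n : ℕ}
    {A P : Matrix (Fin n) (Fin n) ℝ} (hLyap : PosDefQ (P * A + Aᵀ * P)) :
    ∀ w ≠ 0, star w ⬝ᵥ ((Complex.ofRealHom.mapMatrix P * Complex.ofRealHom.mapMatrix A +
      (Complex.ofRealHom.mapMatrix A)ᴴ * Complex.ofRealHom.mapMatrix P) *ᵥ w) ≠ 0 := by
  intro w hw h
  rw [conjTranspose_mapMatrix_ofRealHom, ← map_mul, ← map_mul, ← map_add] at h
  exact (hLyap.re_star_dotProduct_mapMatrix_mulVec_pos hw).ne' (by rw [h, Complex.zero_re])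

theorem spec_mul {m : Type*} [Fintype m] [DecidableEq m] (M N : Matrix m m ℝ) :
    spec (M * N) =
      spectrum ℂ (Complex.ofRealHom.mapMatrix M * Complex.ofRealHom.mapMatrix N) := by
  rw [← map_mul]
  rfl

theorem stmt17 {n : ℕ} (A P G : Matrix (Fin n) (Fin n) ℝ)
    (hPunit : IsUnit P) (hGunit : IsUnit G)
    (hPsymm : P.IsSymm) (hGsymm : G.IsSymm)
    (hPG : P * G = G * P)
    (hLyap : PosDefQ (P * A + Aᵀ * P)) :
    ∀ z ∈ spec (A * G), z.re ≠ 0 := by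
  rw [spec_mul]
  exact stmt17_general (hGunit.map _)
    (by rw [conjTranspose_mapMatrix_ofRealHom, hGsymm.eq, ← map_mul, ← map_mul, hPG])
    hLyap.star_dotProduct_lyapunov_mulVec_ne_zero
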